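/- For every n ≥ 1, D_S(n) = min{2^e, 5^f}, where e = ⌈log_2 n⌉ and f = ⌈log_5(5n/4)⌉; equivalently, 2^e is the smallest power of 2 that is ≥ n and 5^f is the smallest power of 5 that is ≥ 5n/4. -/

import Mathlib

/-- The Salajan sequence: `u j = (3^j - 5*(-1)^j)/4`. -/
def salajanU (j : ℕ) : ℤ := ((3 : ℤ) ^ j - 5 * (-1) ^ j) / 4

/-- The Salajan discriminator. -/
noncomputable def salajanD (n : ℕ) : ℕ :=
  sInf {m : ℕ | 0 < m ∧ ∀ i j : ℕ, 1 ≤ i → i < j → j ≤ n →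
    ¬ (salajanU i ≡ salajanU j [ZMOD (m : ℤ)])}

lemma four_mul_salajanU (j : ℕ) : 4 * salajanU j = 3 ^ j - 5 * (-1) ^ j := by
  unfold salajanU
  refine Int.mul_ediv_cancel' ?_
  induction j with
  | zero => norm_num
  | succ k ih =>
    obtain ⟨c, hc⟩ := ih
    exact ⟨3 * c + 5 * (-1) ^ k, by rw [pow_succ, pow_succ]; linarith⟩

lemma salajanU_modEq_iff (i j m : ℕ) :
    salajanU i ≡ salajanU j [ZMOD m] ↔
      (4 * m : ℤ) ∣ (3 ^ j - 5 * (-1) ^ j) - (3 ^ i - 5 * (-1) ^ i) := by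
  rw [Int.modEq_iff_dvd, ← four_mul_salajanU, ← four_mul_salajanU, ← mul_sub,
    mul_dvd_mul_iff_left (by norm_num)]

lemma salajanU_modEq_iff_of_odd (i j : ℕ) {m : ℕ} (hm : Odd m) :
    salajanU i ≡ salajanU j [ZMOD m] ↔
      (m : ℤ) ∣ (3 ^ j - 5 * (-1) ^ j) - (3 ^ i - 5 * (-1) ^ i) := by
  rw [Int.modEq_iff_dvd, ← four_mul_salajanU, ← four_mul_salajanU, ← mul_sub]
  have h : IsCoprime (m : ℤ) 4 := by
    have : Nat.Coprime m 4 := by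
      simpa using (Nat.coprime_two_right.mpr hm).pow_right 2
    exact_mod_cast Nat.isCoprime_iff_coprime.mpr this
  exact ⟨fun h => h.mul_left _, h.dvd_of_dvd_mul_left⟩

/-- Indices of the same parity collide modulo `m` as soon as `4 * m` divides the difference of the
corresponding powers of `3`. -/
lemma salajanU_modEq_add {i P m : ℕ} (hP : Even P) (h : (4 * m : ℤ) ∣ 3 ^ i * (3 ^ P - 1)) :
    salajanU i ≡ salajanU (i + P) [ZMOD m] := by
  rw [salajanU_modEq_iff, pow_add (-1 : ℤ), hP.neg_one_pow, pow_add]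
  convert h using 1
  ring

/-- The first `n` terms of the Salajan sequence are pairwise incongruent modulo `m`. -/
def SalajanDiscriminates (m n : ℕ) : Prop :=
  ∀ i j : ℕ, 1 ≤ i → i < j → j ≤ n → ¬ (salajanU i ≡ salajanU j [ZMOD (m : ℤ)])

lemma SalajanDiscriminates.mono {m n n' : ℕ} (h : SalajanDiscriminates m n) (hn : n' ≤ n) :
    SalajanDiscriminates m n' :=
  fun i j hi hij hj => h i j hi hij (hj.trans hn)

lemma four_mul_dvd_three_pow_sub_one {i P m : ℕ} (hP : Even P) (hm : m.Coprime 3)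
    (h : salajanU i ≡ salajanU (i + P) [ZMOD m]) : 4 * m ∣ 3 ^ P - 1 := by
  rw [salajanU_modEq_iff, pow_add (-1 : ℤ), hP.neg_one_pow, pow_add] at h
  have h2 : ((4 * m : ℕ) : ℤ) ∣ 3 ^ i * (3 ^ (P) - 1) := by
    convert h using 1
    · push_cast; ring
    · ring
  have h3 : IsCoprime ((4 * m : ℕ) : ℤ) (3 ^ i : ℤ) := by
    have : Nat.Coprime (4 * m) (3 ^ i) := by
      apply Nat.Coprime.pow_right
      exact Nat.Coprime.mul_left (by norm_num) hm
    exact_mod_cast Nat.isCoprime_iff_coprime.mpr this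
  have h4 := h3.dvd_of_dvd_mul_left h2
  have h5 : ((3 ^ (P) - 1 : ℕ) : ℤ) = 3 ^ (P) - 1 := by
    rw [Nat.cast_sub (Nat.one_le_pow _ _ (by norm_num))]
    push_cast; ring
  rw [← h5] at h4
  exact_mod_cast h4

lemma salajanDiscriminates_two_pow (e : ℕ) : SalajanDiscriminates (2 ^ e) (2 ^ e) := by
  intro i j hi hij hj h
  rcases e with _ | e
  · simp at hj; omega
  by_cases hpar : Even (j - i)
  · have h1 := four_mul_dvd_three_pow_sub_one (i := i) (m := 2 ^ (e + 1)) hpar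
      (Nat.Coprime.pow_left _ (by norm_num))
      (by rwa [Nat.add_sub_cancel' hij.le])
    have hne : j - i ≠ 0 := by omega
    have h2 := padicValNat.pow_two_sub_one (x := 3) (n := j - i) (by norm_num) (by norm_num)
      hne hpar
    have h3 : e + 3 ≤ padicValNat 2 (3 ^ (j - i) - 1) := by
      rw [← padicValNat_dvd_iff_le]
      · convert h1 using 1; ring
      · have := Nat.one_lt_pow hne (show 1 < 3 by norm_num)
        omega
    have h4 : padicValNat 2 (3 + 1) = 2 := by
      rw [show 3 + 1 = 2 ^ 2 by norm_num]; exact padicValNat.prime_pow 2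
    have h5 : padicValNat 2 (3 - 1) = 1 := padicValNat.self (by norm_num)
    have h6 : 2 ^ (e + 1) ∣ j - i := by
      rw [padicValNat_dvd_iff_le hne]; omega
    have := Nat.le_of_dvd (by omega) h6
    omega
  · rw [salajanU_modEq_iff] at h
    have h8 : (8 : ℤ) ∣ (3 ^ j - 5 * (-1) ^ j) - (3 ^ i - 5 * (-1) ^ i) := by
      refine dvd_trans ⟨2 ^ e, ?_⟩ h
      push_cast; ring
    have key : ∀ k : ℕ, (3 ^ k - 5 * (-1) ^ k : ℤ) % 8 = if Even k then 4 else 0 := by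
      intro k
      induction k with
      | zero => norm_num
      | succ k ih =>
        have hk := neg_one_pow_eq_or ℤ k
        rcases Nat.even_or_odd k with he | ho
        · simp only [he, if_true, he.neg_one_pow] at ih
          simp only [he.add_one.neg_one_pow, Nat.even_add_one, he, pow_succ]
          simp; omega
        · have : ¬ Even k := Nat.not_even_iff_odd.mpr ho
          simp only [this, if_false, ho.neg_one_pow] at ih
          simp only [ho.add_one.neg_one_pow, Nat.even_add_one, this, pow_succ]
          simp; omega
    have hi' := key i
    have hj' := key j
    rw [Nat.even_sub hij.le] at hpar
    by_cases hie : Even i <;> by_cases hje : Even j <;>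
      simp only [hie, hje, if_true, if_false] at hi' hj' hpar <;>
      first | omega | exact hpar (by tauto)

lemma four_dvd_of_five_dvd_three_pow_sub_one {k : ℕ} (h : 5 ∣ 3 ^ k - 1) : 4 ∣ k := by
  have h1 : (3 : ZMod 5) ^ k = 1 := by
    have := (ZMod.natCast_eq_zero_iff (3 ^ k - 1) 5).mpr h
    rw [Nat.cast_sub (Nat.one_le_pow _ _ (by norm_num))] at this
    push_cast at this
    exact sub_eq_zero.mp this
  have h2 : orderOf (3 : ZMod 5) = 2 ^ (1 + 1) :=
    orderOf_eq_prime_pow (by decide) (by decide)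
  simpa [h2] using orderOf_dvd_of_pow_eq_one h1

lemma salajanDiscriminates_five_pow (f : ℕ) :
    SalajanDiscriminates (5 ^ (f + 1)) (4 * 5 ^ f) := by
  intro i j hi hij hj h
  have : Fact (Nat.Prime 5) := ⟨by norm_num⟩
  by_cases hpar : Even (j - i)
  · have h1 := four_mul_dvd_three_pow_sub_one (i := i) (m := 5 ^ (f + 1)) hpar
      (Nat.Coprime.pow_left _ (by norm_num))
      (by rwa [Nat.add_sub_cancel' hij.le])
    have h2 : 5 ^ (f + 1) ∣ 3 ^ (j - i) - 1 := (Dvd.intro_left _ rfl).trans h1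
    obtain ⟨t, ht⟩ := four_dvd_of_five_dvd_three_pow_sub_one ((dvd_pow_self 5 (by omega)).trans h2)
    have ht0 : t ≠ 0 := by rintro rfl; omega
    rw [ht, pow_mul] at h2
    have h3 := padicValNat.pow_sub_pow (p := 5) (x := 3 ^ 4) (y := 1) (by decide) (by norm_num)
      (by norm_num) (by norm_num) ht0
    rw [one_pow] at h3
    have h4 : padicValNat 5 (3 ^ 4 - 1) = 1 := by
      rw [show 3 ^ 4 - 1 = 5 * 16 by norm_num, padicValNat.mul (by norm_num) (by norm_num),
        padicValNat.self (by norm_num), padicValNat.eq_zero_of_not_dvd (by norm_num)]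
    rw [padicValNat_dvd_iff_le] at h2
    · have h6 : 5 ^ f ∣ t := by
        rw [padicValNat_dvd_iff_le ht0]; omega
      have := Nat.le_of_dvd (by omega) h6
      omega
    · have := Nat.one_lt_pow ht0 (show 1 < 3 ^ 4 by norm_num)
      omega
  · rw [salajanU_modEq_iff_of_odd _ _ (Odd.pow (by decide))] at h
    have h5 : (5 : ℤ) ∣ (3 ^ j - 5 * (-1) ^ j) - (3 ^ i - 5 * (-1) ^ i) := by
      refine dvd_trans ⟨5 ^ f, ?_⟩ h
      push_cast; ring
    have key : ∀ k : ℕ, if Even k then (3 ^ k % 5 = (1 : ℤ) ∨ 3 ^ k % 5 = (4 : ℤ))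
        else (3 ^ k % 5 = (2 : ℤ) ∨ 3 ^ k % 5 = (3 : ℤ)) := by
      intro k
      induction k with
      | zero => norm_num
      | succ k ih =>
        by_cases he : Even k
        · simp only [he, if_true] at ih
          simp only [Nat.even_add_one, he, pow_succ]
          simp; omega
        · simp only [he, if_false] at ih
          simp only [Nat.even_add_one, he, pow_succ]
          simp; omega
    have hi' := key i
    have hj' := key j
    rw [Nat.even_sub hij.le] at hpar
    by_cases hie : Even i <;> by_cases hje : Even j <;>
      simp only [hie, hje, if_true, if_false] at hi' hj' hpar <;>
      first | omega | exact hpar (by tauto)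

lemma SalajanDiscriminates.eq_of_modEq {m n i j : ℕ} (h : SalajanDiscriminates m n)
    (hi : 1 ≤ i) (hj : 1 ≤ j) (hin : i ≤ n) (hjn : j ≤ n)
    (hij : salajanU i ≡ salajanU j [ZMOD m]) : i = j := by
  rcases lt_trichotomy i j with hlt | heq | hlt
  · exact (h i j hi hlt hjn hij).elim
  · exact heq
  · exact (h j i hj hlt hin hij.symm).elim

lemma SalajanDiscriminates.le {m n : ℕ} (hm : 0 < m) (h : SalajanDiscriminates m n) : n ≤ m := by
  by_contra! hlt
  have hm' : (0 : ℤ) < m := by exact_mod_cast hm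
  obtain ⟨i, hi, j, hj, hne, hij⟩ := Finset.exists_ne_map_eq_of_card_lt_of_maps_to
    (s := Finset.Icc 1 n) (t := Finset.range m) (f := fun i => (salajanU i % m).toNat)
    (by simpa using hlt) (by
      intro i _
      have h1 := Int.emod_nonneg (salajanU i) hm'.ne'
      have h2 := Int.emod_lt_of_pos (salajanU i) hm'
      simp only [Finset.coe_range, Set.mem_Iio]
      omega)
  rw [Finset.mem_Icc] at hi hj
  refine hne (h.eq_of_modEq hi.1 hj.1 hi.2 hj.2 ?_)
  have h1 := Int.emod_nonneg (salajanU i) hm'.ne'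
  have h2 := Int.emod_nonneg (salajanU j) hm'.ne'
  show salajanU i % m = salajanU j % m
  omega

/-- `P` is a period of the Salajan sequence modulo `m` coming from the order of `3`. -/
structure IsSalajanPeriod (m P : ℕ) : Prop where
  pos : 0 < P
  even : Even P
  dvd : 4 * m ∣ 3 ^ P - 1

lemma IsSalajanPeriod.modEq {m P : ℕ} (h : IsSalajanPeriod m P) {b i : ℕ} (hb : b ≤ i) :
    salajanU i ≡ salajanU (i + P) [ZMOD (3 ^ b * m : ℕ)] := by
  apply salajanU_modEq_add h.even
  have h1 : 4 * (3 ^ b * m) ∣ 3 ^ i * (3 ^ P - 1) := by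
    rw [show 4 * (3 ^ b * m) = 3 ^ b * (4 * m) by ring]
    exact mul_dvd_mul (pow_dvd_pow 3 hb) h.dvd
  have h2 : ((3 ^ i * (3 ^ P - 1) : ℕ) : ℤ) = 3 ^ i * (3 ^ P - 1) := by
    rw [Nat.cast_mul, Nat.cast_sub (Nat.one_le_pow _ _ (by norm_num))]
    push_cast; ring
  rw [← h2]
  exact_mod_cast h1

lemma IsSalajanPeriod.not_discriminates {m P b i n : ℕ} (h : IsSalajanPeriod m P)
    (hi : 1 ≤ i) (hb : b ≤ i) (hn : i + P ≤ n) : ¬ SalajanDiscriminates (3 ^ b * m) n := by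
  have := h.pos
  exact fun hd => hd i (i + P) hi (by omega) hn (h.modEq hb)

lemma isSalajanPeriod_one : IsSalajanPeriod 1 2 := ⟨by norm_num, by decide, by norm_num⟩

lemma isSalajanPeriod_two_pow (k : ℕ) : IsSalajanPeriod (2 ^ (k + 1)) (2 ^ (k + 1)) := by
  refine ⟨by positivity, (Nat.even_pow' (by omega)).mpr even_two, ?_⟩
  induction k with
  | zero => norm_num
  | succ k ih =>
    have h1 : 3 ^ 2 ^ (k + 1 + 1) - 1 = (3 ^ 2 ^ (k + 1) - 1) * (3 ^ 2 ^ (k + 1) + 1) := by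
      rw [pow_succ 2 (k + 1), pow_mul, mul_comm]
      simpa using Nat.sq_sub_sq (3 ^ 2 ^ (k + 1)) 1
    rw [h1, show 4 * 2 ^ (k + 1 + 1) = 4 * 2 ^ (k + 1) * 2 by ring]
    refine mul_dvd_mul ih (even_iff_two_dvd.mp ?_)
    exact (Odd.pow (by decide)).add_one

lemma isSalajanPeriod_of_odd {m P : ℕ} (hm : Odd m) (hP : Even P) (hpos : 0 < P)
    (h : m ∣ 3 ^ P - 1) : IsSalajanPeriod m P := by
  refine ⟨hpos, hP, ?_⟩
  refine Nat.Coprime.mul_dvd_of_dvd_of_dvd ?_ ?_ h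
  · simpa using (Nat.coprime_two_left.mpr hm).pow_left 2
  · obtain ⟨t, rfl⟩ := hP
    rw [← two_mul, pow_mul]
    exact dvd_trans (by norm_num) (Nat.sub_one_dvd_pow_sub_one (3 ^ 2) t)

lemma isSalajanPeriod_totient {m : ℕ} (hm : Odd m) (hm2 : 2 < m) (h3 : m.Coprime 3) :
    IsSalajanPeriod m m.totient := by
  refine isSalajanPeriod_of_odd hm (Nat.totient_even hm2) (Nat.totient_pos.mpr (by omega)) ?_
  exact (Nat.modEq_iff_dvd' (Nat.one_le_pow _ _ (by norm_num))).mp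
    (Nat.ModEq.pow_totient h3.symm).symm

lemma IsSalajanPeriod.lcm {a b P Q : ℕ} (hab : a.Coprime b) (ha : IsSalajanPeriod a P)
    (hb : IsSalajanPeriod b Q) : IsSalajanPeriod (a * b) (P.lcm Q) := by
  refine ⟨Nat.lcm_pos ha.pos hb.pos, ha.even.trans_dvd (Nat.dvd_lcm_left _ _), ?_⟩
  have hdvd : ∀ {R : ℕ}, R ∣ P.lcm Q → 3 ^ R - 1 ∣ 3 ^ P.lcm Q - 1 := by
    rintro R ⟨t, ht⟩
    rw [ht, pow_mul]
    exact Nat.sub_one_dvd_pow_sub_one _ t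
  have h1 := ha.dvd.trans (hdvd (Nat.dvd_lcm_left P Q))
  have h2 := hb.dvd.trans (hdvd (Nat.dvd_lcm_right P Q))
  obtain ⟨y, hy⟩ := (Dvd.intro _ rfl : 4 ∣ 4 * a).trans h1
  rw [hy] at h1 h2 ⊢
  rw [Nat.mul_dvd_mul_iff_left (by norm_num)] at h1 h2 ⊢
  exact hab.mul_dvd_of_dvd_of_dvd h1 h2

lemma two_mul_lcm_le_of_even {P Q : ℕ} (hP : Even P) (hQ : Even Q) (hpos : 0 < P) :
    2 * P.lcm Q ≤ P * Q := by
  rw [← Nat.gcd_mul_lcm P Q]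
  exact Nat.mul_le_mul_right _
    (Nat.le_of_dvd (Nat.gcd_pos_of_pos_left _ hpos) (Nat.dvd_gcd hP.two_dvd hQ.two_dvd))

lemma exists_isSalajanPeriod (m : ℕ) (hm : 1 < m) (h3 : m.Coprime 3) :
    ∃ P, IsSalajanPeriod m P ∧ P ≤ m ∧ (IsPrimePow m ∨ 2 * P ≤ m) := by
  induction m using Nat.recOnPosPrimePosCoprime with
  | zero => omega
  | one => omega
  | prime_pow p k hp hk =>
    have hpp : IsPrimePow (p ^ k) := hp.isPrimePow.pow hk.ne'
    rcases hp.eq_two_or_odd' with rfl | hodd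
    · obtain ⟨k, rfl⟩ := Nat.exists_eq_succ_of_ne_zero hk.ne'
      exact ⟨_, isSalajanPeriod_two_pow k, le_rfl, .inl hpp⟩
    · have hodd' : Odd (p ^ k) := hodd.pow
      have h2 : 2 < p ^ k := by
        obtain ⟨c, hc⟩ := hodd'
        omega
      exact ⟨_, isSalajanPeriod_totient hodd' h2 h3, Nat.totient_le _, .inl hpp⟩
  | coprime a b ha hb hab iha ihb =>
    obtain ⟨P, hP, hPa, -⟩ := iha ha h3.coprime_mul_right
    obtain ⟨Q, hQ, hQb, -⟩ := ihb hb h3.coprime_mul_left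
    have h1 := two_mul_lcm_le_of_even hP.even hQ.even hP.pos
    have h2 := Nat.mul_le_mul hPa hQb
    exact ⟨_, hP.lcm hab hQ, by omega, .inr (by omega)⟩

lemma not_discriminates_three_mul {m n : ℕ} (hm : 0 < m) (h3 : 3 ∣ m) (hn : m + 3 ≤ 2 * n) :
    ¬ SalajanDiscriminates m n := by
  obtain ⟨b, q, hq, rfl⟩ := Nat.exists_eq_pow_mul_and_not_dvd hm.ne' 3 (by norm_num)
  have hb : 1 ≤ b := by
    by_contra! hb
    obtain rfl : b = 0 := by omega
    simp at h3
    exact hq h3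
  have hcop : q.Coprime 3 := ((Nat.Prime.coprime_iff_not_dvd (by norm_num)).mpr hq).symm
  have hb3 : 2 * b + 1 ≤ 3 ^ b := by
    clear hn h3 hm
    induction b, hb using Nat.le_induction with
    | base => norm_num
    | succ b hb ih => rw [pow_succ]; omega
  have hq0 : 0 < q := Nat.pos_of_mul_pos_left hm
  rcases Nat.eq_or_lt_of_le hq0 with h1 | h1
  · obtain rfl : q = 1 := h1.symm
    exact isSalajanPeriod_one.not_discriminates hb le_rfl (by omega)
  · obtain ⟨P, hP, hPq, -⟩ := exists_isSalajanPeriod q h1 hcop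
    refine hP.not_discriminates hb le_rfl ?_
    have : (2 * b + 1) * q ≤ 3 ^ b * q := Nat.mul_le_mul_right _ hb3
    nlinarith

lemma isPrimePow_of_discriminates {m n : ℕ} (hm : 0 < m) (hn : m + 3 ≤ 2 * n)
    (h : SalajanDiscriminates m n) : IsPrimePow m ∧ ¬ 3 ∣ m := by
  have h3 : ¬ 3 ∣ m := fun h3 => not_discriminates_three_mul hm h3 hn h
  refine ⟨?_, h3⟩
  have hm1 : 1 < m := by
    have := h.le hm
    omega
  obtain ⟨P, hP, hPm, hpp | hle⟩ := exists_isSalajanPeriod m hm1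
    ((Nat.Prime.coprime_iff_not_dvd (by norm_num)).mpr h3).symm
  · exact hpp
  · refine (hP.not_discriminates (b := 0) (i := 1) le_rfl (by omega) (n := n) (by omega) ?_).elim
    simpa using h

/-- A collision modulo `p` among the first `(p + 3) / 2` terms spreads to all powers of `p`. -/
lemma not_discriminates_prime_pow {p a n : ℕ} (hp : p.Prime) (hp5 : 5 ≤ p)
    (h : ¬ SalajanDiscriminates p ((p + 3) / 2)) (hn : p ^ (a + 1) + 3 ≤ 2 * n) :
    ¬ SalajanDiscriminates (p ^ (a + 1)) n := by
  intro hd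
  unfold SalajanDiscriminates at h
  push Not at h
  obtain ⟨i₀, j₀, hi₀, hij₀, hj₀, hcoll⟩ := h
  have hodd : Odd p := hp.odd_of_ne_two (by omega)
  have hp3 : p.Coprime 3 := (Nat.coprime_primes hp (by norm_num)).mpr (by omega)
  have hper : IsSalajanPeriod p (p - 1) := by
    simpa [Nat.totient_prime hp] using isSalajanPeriod_totient hodd (by omega) hp3
  have hmod : ∀ i s : ℕ, salajanU i ≡ salajanU (i + (p - 1) * s) [ZMOD p] := by
    intro i s
    induction s with
    | zero => simp
    | succ s ih =>
      refine ih.trans ?_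
      have := hper.modEq (b := 0) (i := i + (p - 1) * s) (by omega)
      simpa [mul_add, add_assoc] using this
  obtain ⟨S, hS⟩ : Odd (p ^ a) := hodd.pow
  have hM : (0 : ℤ) < (p ^ a : ℕ) := by exact_mod_cast pow_pos hp.pos a
  have hp0 : (0 : ℤ) < p := by exact_mod_cast hp.pos
  let idx : Bool × ℕ → ℕ := fun x => (if x.1 then i₀ else j₀) + (p - 1) * x.2
  have hdvd : ∀ x, (p : ℤ) ∣ salajanU (idx x) - salajanU i₀ := by
    rintro ⟨c, s⟩
    rw [← Int.modEq_iff_dvd]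
    cases c
    · exact hcoll.trans (hmod j₀ s)
    · exact hmod i₀ s
  have hinj : ∀ x y, idx x = idx y → x = y := by
    rintro ⟨c, s⟩ ⟨d, t⟩ hxy
    have hlt : j₀ - 1 < p - 1 := by omega
    have key : ∀ i j s t : ℕ, 1 ≤ i → 1 ≤ j → i ≤ j₀ → j ≤ j₀ →
        i + (p - 1) * s = j + (p - 1) * t → i = j ∧ s = t := by
      intro i j s t hi hj hi' hj' h
      have h1 : ((i - 1) + (p - 1) * s) % (p - 1) = ((j - 1) + (p - 1) * t) % (p - 1) := by
        congr 1; omega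
      rw [Nat.add_mul_mod_self_left, Nat.add_mul_mod_self_left, Nat.mod_eq_of_lt (by omega),
        Nat.mod_eq_of_lt (by omega)] at h1
      have h2 : i = j := by omega
      subst h2
      exact ⟨rfl, Nat.eq_of_mul_eq_mul_left (by omega : 0 < p - 1) (by omega)⟩
    simp only [idx] at hxy
    cases c <;> cases d <;> simp only [Bool.false_eq_true, if_true, if_false] at hxy
    · rw [(key _ _ _ _ (by omega) (by omega) (by omega) (by omega) hxy).2]
    · have := (key _ _ _ _ (by omega) (by omega) (by omega) (by omega) hxy).1
      omega
    · have := (key _ _ _ _ (by omega) (by omega) (by omega) (by omega) hxy).1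
      omega
    · rw [(key _ _ _ _ (by omega) (by omega) (by omega) (by omega) hxy).2]
  have hidx : ∀ x ∈ (Finset.univ : Finset Bool) ×ˢ Finset.range (S + 1),
      1 ≤ idx x ∧ idx x ≤ n := by
    rintro ⟨c, s⟩ hx
    simp only [Finset.mem_product, Finset.mem_univ, true_and, Finset.mem_range] at hx
    have h1 : (p - 1) * s ≤ (p - 1) * S := Nat.mul_le_mul_left _ (by omega)
    have h2 : p ^ (a + 1) = 2 * ((p - 1) * S) + 2 * S + p := by
      obtain ⟨r, rfl⟩ : ∃ r, p = r + 1 := ⟨p - 1, by omega⟩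
      rw [pow_succ, hS, Nat.add_sub_cancel]; ring
    cases c <;> simp only [idx, Bool.false_eq_true, if_true, if_false] <;> omega
  obtain ⟨x, hx, y, hy, hne, hxy⟩ := Finset.exists_ne_map_eq_of_card_lt_of_maps_to
    (s := (Finset.univ : Finset Bool) ×ˢ Finset.range (S + 1)) (t := Finset.range (p ^ a))
    (f := fun x => ((salajanU (idx x) - salajanU i₀) / p % (p ^ a : ℕ)).toNat)
    (by rw [Finset.card_product]; simp; omega) (by
      intro x _
      have h1 := Int.emod_nonneg ((salajanU (idx x) - salajanU i₀) / p) hM.ne'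
      have h2 := Int.emod_lt_of_pos ((salajanU (idx x) - salajanU i₀) / p) hM
      simp only [Finset.coe_range, Set.mem_Iio]
      omega)
  refine hne (hinj x y (hd.eq_of_modEq (hidx x hx).1 (hidx y hy).1 (hidx x hx).2
    (hidx y hy).2 ?_))
  obtain ⟨A, hA⟩ := hdvd x
  obtain ⟨B, hB⟩ := hdvd y
  simp only [hA, hB, Int.mul_ediv_cancel_left _ hp0.ne'] at hxy
  have h1 := Int.emod_nonneg A hM.ne'
  have h2 := Int.emod_nonneg B hM.ne'
  have h3 : A ≡ B [ZMOD (p ^ a : ℕ)] := by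
    show A % _ = B % _
    omega
  obtain ⟨C, hC⟩ := h3.dvd
  rw [Int.modEq_iff_dvd]
  refine ⟨C, ?_⟩
  have : salajanU (idx y) - salajanU (idx x) = p * (B - A) := by linarith
  rw [this, hC]
  push_cast; ring

section DotProduct

variable {F : Type*} [Field F] [Fintype F] [DecidableEq F]

lemma card_dot_eq {x : F × F} (hx : x.1 ≠ 0) (c : F) :
    (Finset.univ.filter fun y : F × F => x.1 * y.1 + x.2 * y.2 = c).card = Fintype.card F := by
  rw [← Finset.card_univ]
  symm
  refine Finset.card_bij (fun t _ => ((c - x.2 * t) / x.1, t)) ?_ ?_ ?_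
  · intro t _
    simp only [Finset.mem_filter, Finset.mem_univ, true_and]
    field_simp
    ring
  · intro s _ t _ h
    exact (Prod.ext_iff.mp h).2
  · rintro ⟨y, t⟩ h
    simp only [Finset.mem_filter, Finset.mem_univ, true_and] at h
    refine ⟨t, Finset.mem_univ _, Prod.ext ?_ rfl⟩
    simp only
    rw [div_eq_iff hx]
    linear_combination -h

lemma card_dot_eq_and_dot_eq_le_one {x x' : F × F} (hx : x.1 ≠ 0) (hne : x ≠ x') {c : F}
    (hc : c ≠ 0) :
    (Finset.univ.filter fun y : F × F =>
      x.1 * y.1 + x.2 * y.2 = c ∧ x'.1 * y.1 + x'.2 * y.2 = c).card ≤ 1 := by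
  rw [Finset.card_le_one]
  rintro ⟨a, b⟩ h ⟨a', b'⟩ h'
  simp only [Finset.mem_filter, Finset.mem_univ, true_and] at h h'
  obtain ⟨h1, h2⟩ := h
  obtain ⟨h3, h4⟩ := h'
  have hdet : x.1 * x'.2 - x.2 * x'.1 ≠ 0 := by
    intro hdet
    have h5 : x.1 * c = x'.1 * c := by
      linear_combination (-x.1) * h2 + x'.1 * h1 + b * hdet
    have h6 : x.1 = x'.1 := mul_right_cancel₀ hc h5
    have h7 : x.2 = x'.2 := by
      apply mul_left_cancel₀ hx
      linear_combination x.2 * h6 - hdet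
    exact hne (Prod.ext h6 h7)
  have h8 : b = b' := by
    apply mul_left_cancel₀ hdet
    linear_combination x.1 * (h2 - h4) - x'.1 * (h1 - h3)
  subst h8
  have h9 : a = a' := by
    apply mul_left_cancel₀ hx
    linear_combination h1 - h3
  rw [h9]

/-- If no vector of `P` and no vector of `Q` have dot product `c ≠ 0`, then `P` and `Q` cannot both
be large. -/
lemma card_mul_card_le_of_dot_ne (P Q : Finset (F × F)) {c : F} (hc : c ≠ 0)
    (hP : ∀ x ∈ P, x.1 ≠ 0) (h : ∀ x ∈ P, ∀ y ∈ Q, x.1 * y.1 + x.2 * y.2 ≠ c) :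
    P.card * Q.card ≤ Fintype.card F ^ 3 := by
  set q : ℤ := (Fintype.card F : ℤ) with hq
  let δ : F × F → F × F → ℤ := fun x y => if x.1 * y.1 + x.2 * y.2 = c then 1 else 0
  let N : F × F → ℤ := fun y => ∑ x ∈ P, δ x y
  have hS1 : ∑ y, N y = q * P.card := by
    simp only [N]
    rw [Finset.sum_comm, Finset.sum_congr rfl (g := fun _ => q)]
    · simp [mul_comm]
    · intro x hx
      simp only [δ, Finset.sum_boole, card_dot_eq (hP x hx), hq]
  have hS2 : ∑ y, N y ^ 2 ≤ q * P.card + (P.card : ℤ) ^ 2 := by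
    have h1 : ∑ y, N y ^ 2 = ∑ x ∈ P, ∑ x' ∈ P, ∑ y, δ x y * δ x' y := by
      simp only [N, sq, Finset.sum_mul_sum]
      rw [Finset.sum_comm]
      refine Finset.sum_congr rfl fun x _ => ?_
      rw [Finset.sum_comm]
    have h2 : ∀ x ∈ P, ∀ x' ∈ P, ∑ y, δ x y * δ x' y ≤ (if x = x' then q else 0) + 1 := by
      intro x hx x' _
      have h3 : ∀ y, δ x y * δ x' y =
          if x.1 * y.1 + x.2 * y.2 = c ∧ x'.1 * y.1 + x'.2 * y.2 = c then 1 else 0 := by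
        intro y
        simp only [δ, ite_zero_mul_ite_zero, mul_one]
      simp only [h3, Finset.sum_boole]
      by_cases hxx : x = x'
      · subst hxx
        simp only [and_self, card_dot_eq (hP x hx), if_true, hq]
        omega
      · have := card_dot_eq_and_dot_eq_le_one (hP x hx) hxx hc
        simp only [hxx, if_false]
        exact_mod_cast this
    rw [h1]
    calc ∑ x ∈ P, ∑ x' ∈ P, ∑ y, δ x y * δ x' y
        ≤ ∑ x ∈ P, ∑ x' ∈ P, ((if x = x' then q else 0) + 1) :=
          Finset.sum_le_sum fun x hx => Finset.sum_le_sum fun x' hx' => h2 x hx x' hx'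
      _ = ∑ x ∈ P, (q + P.card) := by
          refine Finset.sum_congr rfl fun x hx => ?_
          rw [Finset.sum_add_distrib, Finset.sum_ite_eq]
          simp [hx]
      _ = q * P.card + (P.card : ℤ) ^ 2 := by
          rw [Finset.sum_const, nsmul_eq_mul]; ring
  have hvar : ∑ y, (q * N y - P.card) ^ 2 ≤ q ^ 3 * P.card := by
    have h1 : ∑ y, (q * N y - P.card) ^ 2 =
        q ^ 2 * ∑ y, N y ^ 2 - 2 * q * P.card * ∑ y, N y + q ^ 2 * (P.card : ℤ) ^ 2 := by
      have h2 : ∀ y, (q * N y - P.card) ^ 2 =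
          q ^ 2 * N y ^ 2 - 2 * q * P.card * N y + (P.card : ℤ) ^ 2 := fun y => by ring
      simp only [h2, Finset.sum_add_distrib, Finset.sum_sub_distrib, ← Finset.mul_sum]
      rw [Finset.sum_const, Finset.card_univ, Fintype.card_prod]
      simp only [nsmul_eq_mul, Nat.cast_mul, ← hq]
      ring
    rw [h1, hS1]
    nlinarith [mul_le_mul_of_nonneg_left hS2 (sq_nonneg q)]
  have hlow : (Q.card : ℤ) * (P.card : ℤ) ^ 2 ≤ ∑ y, (q * N y - P.card) ^ 2 := by
    calc (Q.card : ℤ) * (P.card : ℤ) ^ 2 = ∑ y ∈ Q, (q * N y - P.card) ^ 2 := by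
          rw [← nsmul_eq_mul, ← Finset.sum_const]
          refine Finset.sum_congr rfl fun y hy => ?_
          have : N y = 0 := Finset.sum_eq_zero fun x hx => by simp [δ, h x hx y hy]
          rw [this]; ring
      _ ≤ _ := Finset.sum_le_sum_of_subset_of_nonneg (Finset.subset_univ _)
          fun y _ _ => sq_nonneg _
  rcases Nat.eq_zero_or_pos P.card with h0 | h0
  · rw [h0, zero_mul]; exact Nat.zero_le _
  · have h0' : (0 : ℤ) < P.card := by exact_mod_cast h0
    have h1 : ((P.card * Q.card : ℕ) : ℤ) * P.card ≤ ((Fintype.card F ^ 3 : ℕ) : ℤ) * P.card := by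
      push_cast
      rw [← hq]
      linarith
    exact_mod_cast le_of_mul_le_mul_right h1 h0'

end DotProduct

lemma not_discriminates_of_large_prime {p : ℕ} (hp : p.Prime) (hlarge : 4096 < p) :
    ¬ SalajanDiscriminates p ((p + 3) / 2) := by
  intro hd
  have : Fact p.Prime := ⟨hp⟩
  have hodd : Odd p := hp.odd_of_ne_two (by omega)
  obtain ⟨r, hr⟩ := hodd
  set K := (p + 7) / 8 with hK
  have hcast : ∀ i j : ℕ, ((3 : ZMod p) ^ j - 5 * (-1) ^ j = 3 ^ i - 5 * (-1) ^ i) →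
      salajanU i ≡ salajanU j [ZMOD p] := by
    intro i j hij
    rw [salajanU_modEq_iff_of_odd i j ⟨r, hr⟩, ← ZMod.intCast_zmod_eq_zero_iff_dvd]
    push_cast
    exact sub_eq_zero.mpr hij
  have hunit : ∀ n : ℕ, n ∣ 10 ^ 3 * 3 → (n : ZMod p) ≠ 0 := by
    intro n hn h0
    rw [ZMod.natCast_eq_zero_iff] at h0
    have := Nat.le_of_dvd (by norm_num) (h0.trans hn)
    omega
  have h3 : (3 : ZMod p) ≠ 0 := by exact_mod_cast hunit 3 (by norm_num)
  have h10 : (10 : ZMod p) ≠ 0 := by exact_mod_cast hunit 10 (by norm_num)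
  have h9 : (9 : ZMod p) = 3 ^ 2 := by norm_num
  have h9' : (9 : ZMod p) ≠ 0 := by rw [h9]; exact pow_ne_zero _ h3
  have heven : ∀ k : ℕ, (3 : ZMod p) ^ (2 * k) - 5 * (-1) ^ (2 * k) = 9 ^ k - 5 := by
    intro k
    rw [pow_mul 3, ← h9, (even_two_mul k).neg_one_pow, mul_one]
  have hoddidx : ∀ k : ℕ,
      (3 : ZMod p) ^ (2 * k + 1) - 5 * (-1) ^ (2 * k + 1) = 3 * 9 ^ k + 5 := by
    intro k
    rw [pow_succ 3, pow_mul 3, ← h9, (odd_two_mul_add_one k).neg_one_pow]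
    ring
  have hinj : ∀ k < K, ∀ l < K, (9 : ZMod p) ^ k = 9 ^ l → k = l := by
    intro k hk l hl hkl
    have := hd.eq_of_modEq (i := 2 * k + 1) (j := 2 * l + 1) (by omega) (by omega) (by omega)
      (by omega) (hcast _ _ (by rw [hoddidx, hoddidx, hkl]))
    omega
  let g : ZMod p → ZMod p → ℕ × ℕ → ZMod p × ZMod p := fun u v x => (u * 9 ^ x.1, v * 9 ^ x.2)
  let R := Finset.range K ×ˢ Finset.range K
  have hcard : ∀ u v, u ≠ 0 → v ≠ 0 → (R.image (g u v)).card = K ^ 2 := by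
    intro u v hu hv
    rw [Finset.card_image_of_injOn]
    · simp [R, sq]
    · rintro ⟨k, l⟩ hkl ⟨k', l'⟩ hkl' heq
      simp only [R, Finset.coe_product, Finset.coe_range, Set.mem_prod, Set.mem_Iio] at hkl hkl'
      simp only [g, Prod.mk.injEq, mul_eq_mul_left_iff, hu, hv, or_false] at heq
      rw [hinj k hkl.1 k' hkl'.1 heq.1, hinj l hkl.2 l' hkl'.2 heq.2]
  have hbound := card_mul_card_le_of_dot_ne (R.image (g 1 1))
    (R.image (g 9 (-3))) h10 (by
      intro x hx
      obtain ⟨y, -, rfl⟩ := Finset.mem_image.mp hx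
      simp [g, h9']) (by
      intro x hx y hy hxy
      obtain ⟨⟨k, l⟩, hkl, rfl⟩ := Finset.mem_image.mp hx
      obtain ⟨⟨k', l'⟩, hkl', rfl⟩ := Finset.mem_image.mp hy
      simp only [R, Finset.mem_product, Finset.mem_range] at hkl hkl'
      simp only [g] at hxy
      have := hd.eq_of_modEq (i := 2 * (k + k' + 1)) (j := 2 * (l + l') + 1) (by omega) (by omega)
        (by omega) (by omega) (hcast _ _ (by
          rw [hoddidx, heven]
          linear_combination -hxy))
      omega)
  rw [hcard _ _ one_ne_zero one_ne_zero, hcard _ _ h9' (neg_ne_zero.mpr h3), ZMod.card] at hbound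
  have hpK : p ≤ 8 * K := by omega
  have h1 : p ^ 4 ≤ (8 * K) ^ 4 := Nat.pow_le_pow_left hpK 4
  have h2 : 4096 * p ^ 3 < p * p ^ 3 := Nat.mul_lt_mul_of_pos_right hlarge (by positivity)
  nlinarith

/-- `4 * u j + 5`, as a natural number. -/
def salajanShift (j : ℕ) : ℕ := 3 ^ j + 10 * (j % 2)

/-- The product of the distances from `a` to the first `n` shifted terms. -/
def salajanDistProd (a : ℕ) : ℕ → ℕ
  | 0 => 1
  | i + 1 => ((a - salajanShift (i + 1)) + (salajanShift (i + 1) - a)) * salajanDistProd a i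

/-- The product of the pairwise distances of the first `n` shifted terms. -/
def salajanPairProd : ℕ → ℕ
  | 0 => 1
  | j + 1 => salajanDistProd (salajanShift (j + 1)) j * salajanPairProd j

lemma salajanShift_eq (j : ℕ) : (salajanShift j : ℤ) = 3 ^ j - 5 * (-1) ^ j + 5 := by
  unfold salajanShift
  rcases Nat.even_or_odd j with h | h
  · rw [Nat.even_iff.mp h, h.neg_one_pow]; push_cast; ring
  · rw [Nat.odd_iff.mp h, h.neg_one_pow]; push_cast; ring

lemma exists_dvd_of_dvd_distProd {p : ℕ} (hp : p.Prime) (a n : ℕ) (h : p ∣ salajanDistProd a n) :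
    ∃ i, 1 ≤ i ∧ i ≤ n ∧ (p : ℤ) ∣ a - salajanShift i := by
  induction n with
  | zero => exact (hp.one_lt.ne' (Nat.dvd_one.mp h)).elim
  | succ n ih =>
    rcases hp.dvd_mul.mp h with h | h
    · refine ⟨n + 1, by omega, le_rfl, ?_⟩
      have h' : (p : ℤ) ∣ ((a - salajanShift (n + 1)) + (salajanShift (n + 1) - a) : ℕ) := by
        exact_mod_cast h
      rcases le_total a (salajanShift (n + 1)) with hle | hle
      · rw [dvd_sub_comm]
        rwa [Nat.sub_eq_zero_of_le hle, zero_add, Nat.cast_sub hle] at h'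
      · rwa [Nat.sub_eq_zero_of_le hle, add_zero, Nat.cast_sub hle] at h'
    · obtain ⟨i, h1, h2, h3⟩ := ih h
      exact ⟨i, h1, by omega, h3⟩

lemma not_discriminates_of_dvd_pairProd {p : ℕ} (hp : p.Prime) (hodd : Odd p) (n : ℕ)
    (h : p ∣ salajanPairProd n) : ¬ SalajanDiscriminates p n := by
  induction n with
  | zero => exact (hp.one_lt.ne' (Nat.dvd_one.mp h)).elim
  | succ n ih =>
    rcases hp.dvd_mul.mp h with h | h
    · obtain ⟨i, h1, h2, h3⟩ := exists_dvd_of_dvd_distProd hp _ _ h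
      refine fun hd => hd i (n + 1) h1 (by omega) le_rfl ?_
      rw [salajanU_modEq_iff_of_odd _ _ hodd]
      rw [salajanShift_eq, salajanShift_eq] at h3
      convert h3 using 1; ring
    · exact fun hd => ih h (hd.mono (by omega))

/-- The product of the `c * w` consecutive integers from `lo` on, in blocks of length `w`. -/
def consecutiveProd (lo w : ℕ) : ℕ → ℕ
  | 0 => 1
  | c + 1 => (lo + c * w).ascFactorial w * consecutiveProd lo w c

lemma dvd_ascFactorial {m lo len : ℕ} (hlo : lo ≤ m) (hhi : m < lo + len) :
    m ∣ lo.ascFactorial len := by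
  rw [Nat.ascFactorial_eq_prod_range]
  exact (dvd_of_eq (by omega)).trans
    (Finset.dvd_prod_of_mem (fun i => lo + i) (Finset.mem_range.mpr (by omega : m - lo < len)))

lemma dvd_consecutiveProd {m lo w c : ℕ} (hlo : lo ≤ m) (hhi : m < lo + c * w) :
    m ∣ consecutiveProd lo w c := by
  induction c with
  | zero => omega
  | succ c ih =>
    rcases lt_or_ge m (lo + c * w) with h | h
    · exact (ih h).mul_left _
    · exact (dvd_ascFactorial h (by rw [add_one_mul] at hhi; omega)).mul_right _

lemma not_discriminates_of_pairProd_mod_eq_zero {p : ℕ} (lo w c N : ℕ) (hp : p.Prime)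
    (hodd : Odd p) (hlo : lo ≤ p) (hhi : p < lo + c * w) (hN : 2 * N ≤ lo + 3)
    (h : salajanPairProd N % consecutiveProd lo w c = 0) :
    ¬ SalajanDiscriminates p ((p + 3) / 2) := by
  have hdvd := dvd_consecutiveProd hlo hhi
  exact fun hd => not_discriminates_of_dvd_pairProd hp hodd N
    (hdvd.trans (Nat.dvd_of_mod_eq_zero h)) (hd.mono (by omega))

lemma not_discriminates_of_small_prime {p : ℕ} (hp : p.Prime) (hp7 : 7 ≤ p) (hsmall : p ≤ 4096) :
    ¬ SalajanDiscriminates p ((p + 3) / 2) := by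
  have hodd : Odd p := hp.odd_of_ne_two (by omega)
  have key := not_discriminates_of_pairProd_mod_eq_zero (p := p)
  rcases lt_or_ge p 13 with h | h
  · exact key 7 6 1 5 hp hodd (by omega) (by omega) (by omega) (by decide +kernel)
  rcases lt_or_ge p 29 with h | h
  · exact key 13 16 1 8 hp hodd (by omega) (by omega) (by omega) (by decide +kernel)
  rcases lt_or_ge p 58 with h | h
  · exact key 29 29 1 16 hp hodd (by omega) (by omega) (by omega) (by decide +kernel)
  rcases lt_or_ge p 131 with h | h
  · exact key 58 73 1 30 hp hodd (by omega) (by omega) (by omega) (by decide +kernel)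
  rcases lt_or_ge p 379 with h | h
  · exact key 131 31 8 67 hp hodd (by omega) (by omega) (by omega) (by decide +kernel)
  rcases lt_or_ge p 2459 with h | h
  · exact key 379 52 40 191 hp hodd (by omega) (by omega) (by omega) (by decide +kernel)
  · exact key 2459 42 39 275 hp hodd (by omega) (by omega) (by omega) (by decide +kernel)

lemma not_discriminates_of_prime {p : ℕ} (hp : p.Prime) (hp7 : 7 ≤ p) :
    ¬ SalajanDiscriminates p ((p + 3) / 2) := by
  rcases le_or_gt p 4096 with h | h
  · exact not_discriminates_of_small_prime hp hp7 h
  · exact not_discriminates_of_large_prime hp h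

/-- A modulus that discriminates more than half as many terms as its size is a power of `2`
or of `5`. -/
lemma eq_two_pow_or_eq_five_pow {m n : ℕ} (hm : 0 < m) (hn : m + 3 ≤ 2 * n)
    (h : SalajanDiscriminates m n) : (∃ b, m = 2 ^ b) ∨ ∃ b, m = 5 ^ (b + 1) := by
  obtain ⟨hpp, h3⟩ := isPrimePow_of_discriminates hm hn h
  obtain ⟨p, k, hp, hk, rfl⟩ := (isPrimePow_nat_iff m).mp hpp
  obtain ⟨a, rfl⟩ := Nat.exists_eq_succ_of_ne_zero hk.ne'
  rcases lt_or_ge p 7 with h7 | h7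
  · have := hp.two_le
    interval_cases p
    · exact .inl ⟨_, rfl⟩
    · exact (h3 (dvd_pow_self 3 (by omega))).elim
    · norm_num at hp
    · exact .inr ⟨_, rfl⟩
    · norm_num at hp
  · exact (not_discriminates_prime_pow hp (by omega) (not_discriminates_of_prime hp h7) hn h).elim

lemma SalajanDiscriminates.le_of_five_pow {b n : ℕ} (h : SalajanDiscriminates (5 ^ (b + 1)) n) :
    n ≤ 4 * 5 ^ b := by
  by_contra! hlt
  have h1 : 5 ^ 1 ≤ 5 ^ (b + 1) := Nat.pow_le_pow_right (by norm_num) (by omega)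
  have h2 := isSalajanPeriod_totient (m := 5 ^ (b + 1)) (Odd.pow (by decide)) (by omega)
    (Nat.Coprime.pow_left _ (by norm_num))
  rw [Nat.totient_prime_pow_succ (by norm_num)] at h2
  refine h2.not_discriminates (b := 0) (i := 1) (n := n) le_rfl (by omega) (by omega) ?_
  simpa using h

/-- Salajan's conjecture: `D_S(n) = min(2^e, 5^f)` where `2^e` is the smallest power
of `2` that is `≥ n` and `5^f` is the smallest power of `5` that is `≥ 5n/4`. -/
theorem salajan_conjecture (n : ℕ) (hn : 1 ≤ n) (e f : ℕ)
    (he : n ≤ 2 ^ e ∧ ∀ e' : ℕ, n ≤ 2 ^ e' → e ≤ e')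
    (hf : 5 * n ≤ 4 * 5 ^ f ∧ ∀ f' : ℕ, 5 * n ≤ 4 * 5 ^ f' → f ≤ f') :
    salajanD n = min (2 ^ e) (5 ^ f) := by
  have he1 : SalajanDiscriminates (2 ^ e) n := (salajanDiscriminates_two_pow e).mono he.1
  have hf0 : f ≠ 0 := by
    rintro rfl
    have := hf.1
    omega
  obtain ⟨g, rfl⟩ := Nat.exists_eq_succ_of_ne_zero hf0
  have hf1 : SalajanDiscriminates (5 ^ (g + 1)) n := by
    refine (salajanDiscriminates_five_pow g).mono ?_
    have := hf.1
    rw [Nat.succ_eq_add_one, pow_succ] at this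
    omega
  refine IsLeast.csInf_eq ⟨?_, ?_⟩
  · rcases min_choice (2 ^ e) (5 ^ (g + 1)) with h | h <;> rw [Nat.succ_eq_add_one, h]
    · exact ⟨by positivity, he1⟩
    · exact ⟨by positivity, hf1⟩
  · rintro m ⟨hm, hd⟩
    have hd : SalajanDiscriminates m n := hd
    have hnm := hd.le hm
    by_contra! hlt
    obtain ⟨hlt2, hlt5⟩ := lt_min_iff.mp hlt
    have he0 : e ≠ 0 := by
      rintro rfl
      omega
    obtain ⟨d, rfl⟩ := Nat.exists_eq_succ_of_ne_zero he0
    have hdn : 2 ^ d < n := by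
      by_contra! hle
      have := he.2 d hle
      omega
    rw [Nat.succ_eq_add_one, pow_succ] at hlt2
    rcases eq_two_pow_or_eq_five_pow hm (by omega) hd with ⟨b, rfl⟩ | ⟨b, rfl⟩
    · have := he.2 b hnm
      have := Nat.pow_le_pow_right (show 0 < 2 by norm_num) this
      rw [Nat.succ_eq_add_one, pow_succ] at this
      omega
    · have := hf.2 (b + 1) (by
        have := hd.le_of_five_pow
        rw [pow_succ]
        omega)
      have := Nat.pow_le_pow_right (show 0 < 5 by norm_num) this
      omega
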